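/- For all d₁, d₂ ∈ [0, π/4] and d₃ ∈ [|d₁−d₂|, d₁+d₂] with d₁, d₃ ∈ (0, π/4+π/4], the inequality d₂² ≥ d₁² − 2 d₁ d₃ (cos d₂ − cos d₃ cos d₁)/(sin d₁ sin d₃) + (1/2) d₃² holds (with the convention that the middle term is interpreted by continuity when d₁ = 0 or d₃ = 0). -/

import Mathlib

open Real

/-- Along a curve `u t = a cos t + b sin t` with `|u| < 1`, the angle `arccos (u t)` has the expected
derivative. -/
theorem hasDerivAt_arccos_add_cos_sin {a b : ℝ} (hab : a ^ 2 + b ^ 2 < 1) (t : ℝ) :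
    HasDerivAt (fun t => arccos (a * cos t + b * sin t))
      (-(b * cos t - a * sin t) / sin (arccos (a * cos t + b * sin t))) t := by
  have hu : (a * cos t + b * sin t) ^ 2 < 1 := by
    nlinarith [sin_sq_add_cos_sq t, sq_nonneg (a * sin t - b * cos t)]
  have hlt := abs_lt.1 ((sq_lt_one_iff_abs_lt_one _).1 hu)
  have hd : HasDerivAt (fun t => a * cos t + b * sin t) (b * cos t - a * sin t) t := by
    refine (((hasDerivAt_cos t).const_mul a).add ((hasDerivAt_sin t).const_mul b)).congr_deriv ?_
    ring
  refine ((hasDerivAt_arccos hlt.1.ne' hlt.2.ne).comp t hd).congr_deriv ?_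
  rw [sin_arccos]
  ring

/-- If the great-circle arc `t ↦ arccos (a cos t + b sin t)`, `0 ≤ t ≤ L`, stays within distance
`π / 3` of the base point, then half the squared distance is `1 / 2`-strongly convex along it. -/
theorem arccos_sq_ge_of_arc {a b L : ℝ} (hab : a ^ 2 + b ^ 2 < 1) (hL : 0 < L)
    (hu : ∀ t ∈ Set.Icc 0 L, 1 / 2 ≤ a * cos t + b * sin t) :
    arccos a ^ 2 - 2 * arccos a * b / sin (arccos a) * L + 1 / 2 * L ^ 2
      ≤ arccos (a * cos L + b * sin L) ^ 2 := by
  set θ : ℝ → ℝ := fun t => arccos (a * cos t + b * sin t) with hθ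
  set v : ℝ → ℝ := fun t => b * cos t - a * sin t with hv
  have hbd (t : ℝ) : |a * cos t + b * sin t| < 1 := by
    rw [← sq_lt_one_iff_abs_lt_one]
    nlinarith [sin_sq_add_cos_sq t, sq_nonneg (a * sin t - b * cos t)]
  have hcos (t : ℝ) : cos (θ t) = a * cos t + b * sin t :=
    cos_arccos (abs_lt.1 (hbd t)).1.le (abs_lt.1 (hbd t)).2.le
  have hpos (t : ℝ) : 0 < θ t := arccos_pos.2 (abs_lt.1 (hbd t)).2
  have hsin (t : ℝ) : 0 < sin (θ t) := by
    rw [hθ, sin_arccos]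
    exact sqrt_pos.2 (sub_pos.2 ((sq_lt_one_iff_abs_lt_one _).2 (hbd t)))
  have hdθ (t : ℝ) : HasDerivAt θ (-v t / sin (θ t)) t := hasDerivAt_arccos_add_cos_sin hab t
  have hdv (t : ℝ) : HasDerivAt v (-cos (θ t)) t := by
    rw [hcos]
    refine (((hasDerivAt_cos t).const_mul b).sub ((hasDerivAt_sin t).const_mul a)).congr_deriv ?_
    ring
  set g : ℝ → ℝ := fun t => θ t ^ 2 - 1 / 2 * t ^ 2 with hg
  set g' : ℝ → ℝ := fun t => -2 * (θ t * v t / sin (θ t)) - t with hg'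
  have hdg (t : ℝ) : HasDerivAt g (g' t) t := by
    refine (((hdθ t).pow 2).sub (((hasDerivAt_id t).pow 2).const_mul (1 / 2))).congr_deriv ?_
    simp [hg']
    ring
  have hdg' (t : ℝ) : HasDerivAt g'
      (2 * (v t ^ 2 * (sin (θ t) - θ t * cos (θ t)) / sin (θ t) ^ 3)
        + 2 * (θ t * cos (θ t) / sin (θ t)) - 1) t := by
    refine (((((hdθ t).mul (hdv t)).div (hdθ t).sin (hsin t).ne').const_mul (-2)).sub
      (hasDerivAt_id t)).congr_deriv ?_
    have := (hsin t).ne'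
    simp only [Pi.mul_apply]
    field_simp
    ring
  have hmono : MonotoneOn g' (Set.Icc 0 L) := by
    refine monotoneOn_of_deriv_nonneg (convex_Icc 0 L)
      (fun t _ => (hdg' t).continuousAt.continuousWithinAt)
      (fun t _ => (hdg' t).differentiableAt.differentiableWithinAt) fun t ht => ?_
    rw [(hdg' t).deriv]
    have hc : 1 / 2 ≤ cos (θ t) := by
      rw [hcos]
      exact hu t (interior_subset ht)
    have hs := hsin t
    have hle : θ t ≤ tan (θ t) := by
      refine le_tan (hpos t).le ?_
      rw [hθ, arccos_lt_pi_div_two, ← hcos]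
      linarith
    rw [tan_eq_sin_div_cos, le_div_iff₀ (by linarith)] at hle
    have hrad : 0 ≤ v t ^ 2 * (sin (θ t) - θ t * cos (θ t)) / sin (θ t) ^ 3 :=
      div_nonneg (mul_nonneg (sq_nonneg _) (sub_nonneg.2 hle)) (by positivity)
    have htan : 1 / 2 ≤ θ t * cos (θ t) / sin (θ t) := by
      rw [le_div_iff₀ hs]
      nlinarith [sin_lt (hpos t), hpos t]
    linarith
  obtain ⟨ξ, hξ, hslope⟩ := exists_hasDerivAt_eq_slope g g' hL
    (fun t _ => (hdg t).continuousAt.continuousWithinAt) fun t _ => hdg t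
  have h0 := hmono (Set.left_mem_Icc.2 hL.le) (Set.Ioo_subset_Icc_self hξ) hξ.1.le
  rw [hslope, le_div_iff₀ (by linarith)] at h0
  simp only [hg', hg, hθ, hv, cos_zero, sin_zero, mul_one, mul_zero, add_zero, sub_zero] at h0
  have : 2 * arccos a * b / sin (arccos a) = 2 * (arccos a * b / sin (arccos a)) := by ring
  rw [this]
  linarith

theorem stmt_11 (d₁ d₂ d₃ : ℝ)
    (h1 : d₁ ∈ Set.Icc 0 (π / 4)) (h2 : d₂ ∈ Set.Icc 0 (π / 4))
    (h3 : d₃ ∈ Set.Icc |d₁ - d₂| (d₁ + d₂))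
    (h1pos : 0 < d₁) (h3pos : 0 < d₃) :
    d₂ ^ 2 ≥ d₁ ^ 2 - 2 * d₁ * d₃ * (cos d₂ - cos d₃ * cos d₁) / (sin d₁ * sin d₃)
      + 1 / 2 * d₃ ^ 2 := by
  obtain ⟨-, h1⟩ := h1
  obtain ⟨h20, h2⟩ := h2
  obtain ⟨h3l, h3u⟩ := h3
  obtain ⟨h3a, h3b⟩ := abs_le.1 h3l
  have hπ := pi_pos
  have hs1 : 0 < sin d₁ := sin_pos_of_pos_of_lt_pi h1pos (by linarith)
  have hs3 : 0 < sin d₃ := sin_pos_of_pos_of_lt_pi h3pos (by linarith)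
  rcases (show d₂ ≤ d₁ + d₃ by linarith).eq_or_lt with rfl | hadd
  · have : 2 * d₁ * d₃ * (cos (d₁ + d₃) - cos d₃ * cos d₁) / (sin d₁ * sin d₃)
        = -(2 * d₁ * d₃) := by
      rw [cos_add]
      field_simp
      ring
    rw [this]
    nlinarith [sq_nonneg d₃]
  rcases (show |d₁ - d₃| ≤ d₂ from abs_le.2 ⟨by linarith, by linarith⟩).eq_or_lt with rfl | hsub
  · have : 2 * d₁ * d₃ * (cos |d₁ - d₃| - cos d₃ * cos d₁) / (sin d₁ * sin d₃)
        = 2 * d₁ * d₃ := by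
      rw [cos_abs, cos_sub]
      field_simp
      ring
    rw [this, sq_abs]
    nlinarith [sq_nonneg d₃]
  have hlow : cos (d₁ + d₃) < cos d₂ := cos_lt_cos_of_nonneg_of_le_pi h20 (by linarith) hadd
  have hupp : cos d₂ < cos (d₁ - d₃) := by
    rw [← cos_abs (d₁ - d₃)]
    exact cos_lt_cos_of_nonneg_of_le_pi (abs_nonneg _) (by linarith) hsub
  rw [cos_add] at hlow
  rw [cos_sub] at hupp
  set b := (cos d₂ - cos d₃ * cos d₁) / sin d₃ with hb
  have hbs : b * sin d₃ = cos d₂ - cos d₃ * cos d₁ := div_mul_cancel₀ _ hs3.ne'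
  have hb1 : -sin d₁ < b := by
    rw [hb, lt_div_iff₀ hs3]
    linarith
  have hb2 : b < sin d₁ := by
    rw [hb, div_lt_iff₀ hs3]
    linarith
  have hab : cos d₁ ^ 2 + b ^ 2 < 1 := by nlinarith [sin_sq_add_cos_sq d₁]
  have hhalf {x : ℝ} (hx0 : 0 ≤ x) (hx : x ≤ π / 4) : 1 / 2 ≤ cos x := by
    rw [← cos_pi_div_three]
    exact cos_le_cos_of_nonneg_of_le_pi hx0 (by linarith) (by linarith)
  have hu : ∀ t ∈ Set.Icc 0 d₃, 1 / 2 ≤ cos d₁ * cos t + b * sin t := by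
    rintro t ⟨ht0, ht⟩
    have hst : 0 ≤ sin t := sin_nonneg_of_nonneg_of_le_pi ht0 (by linarith)
    have hst' : 0 ≤ sin (d₃ - t) := sin_nonneg_of_nonneg_of_le_pi (by linarith) (by linarith)
    have hslerp : (cos d₁ * cos t + b * sin t) * sin d₃
        = cos d₁ * sin (d₃ - t) + cos d₂ * sin t := by
      rw [sin_sub]
      linear_combination sin t * hbs
    have hsum : sin d₃ ≤ sin (d₃ - t) + sin t := by
      have h := sin_add (d₃ - t) t
      rw [sub_add_cancel] at h
      nlinarith [cos_le_one t, cos_le_one (d₃ - t)]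
    refine le_of_mul_le_mul_right ?_ hs3
    rw [hslerp]
    nlinarith [hhalf h1pos.le h1, hhalf h20 h2]
  have key := arccos_sq_ge_of_arc hab h3pos hu
  rw [show cos d₁ * cos d₃ + b * sin d₃ = cos d₂ by linear_combination hbs,
    arccos_cos h1pos.le (by linarith), arccos_cos h20 (by linarith)] at key
  have : 2 * d₁ * d₃ * (cos d₂ - cos d₃ * cos d₁) / (sin d₁ * sin d₃)
      = 2 * d₁ * b / sin d₁ * d₃ := by
    rw [hb]
    field_simp
  rw [this]
  exact key
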